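/- If p is a strictly positive form in R[x]_{3,2d} (i.e., p(x) > 0 for all nonzero x in R^3), and ℓ is a nonzero linear functional in Σ_{3,4d}^* with ℓ(p^2) = 0, then a contradiction follows under the hypotheses of the positive Gorenstein theorem; equivalently: the square p^2 of any strictly positive ternary form p of degree 2d lies in the interior of the cone Σ_{3,4d}. -/

import Mathlib

open MvPolynomial

/-!
Suppose `l (p ^ 2) = 0`. Among the nonzero positive semidefinite moment forms whose kernel
contains that of `l`, choose one with maximal kernel; it comes from a functional `e` whose moment
form is determined up to scaling by its kernel. That kernel contains `p`. It also contains a form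
`q` without common zeros with `p` on the line `z = 0`: if all of it vanished at a (necessarily
nonreal) zero `(ζ : 1 : 0)` of `p`, both the real and the imaginary part of evaluation there would
be multiples of `e`.

Now `e` kills the multiples of `p` and `q` of degree `2 * D`, `D` being the degree of `p`, so it
extends to a functional on `ℝ[x, y, z] / (z - 1, p, q)`. Let `B` be the Gorenstein quotient on
which the induced multiplication form `(a, b) ↦ e (a * b)` is nondegenerate. As `p` has no real
zero, `B` has no real point, hence contains a square root `i` of `-1`. If `V ⊆ B` is the image of
the forms of degree `D`, the multiplication form is positive semidefinite on `V` and negative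
semidefinite on `i * V`, so `2 * dim V ≤ dim B`. But the complete intersection of `p` and `q` has
symmetric Hilbert differences `1, 2, …, D, D - 1, …, 1`, and the estimates they give on those of
`B` yield `dim B < 2 * dim V`.
-/

section RealAlgebra

lemma exists_mul_self_eq_neg_one_of_isNilpotent {B : Type*} [CommRing B] (h2 : IsUnit (2 : B))
    {x : B} (hx : IsNilpotent (x * x + 1)) : ∃ i : B, i * i = -1 := by
  have hu : IsUnit x := by
    have h := hx.isUnit_sub_one
    rw [add_sub_cancel_right] at h
    exact isUnit_of_mul_isUnit_left h
  -- Newton iteration from the approximate root `x` of `X ^ 2 + 1`, whose derivative `2 * x` is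
  -- invertible.
  obtain ⟨i, ⟨-, hi⟩, -⟩ := Polynomial.existsUnique_nilpotent_sub_and_aeval_eq_zero
    (P := (Polynomial.X ^ 2 + 1 : Polynomial ℤ)) (x := x) (by simpa [pow_two] using hx)
    (by simpa [map_ofNat (Polynomial.aeval x) 2, one_add_one_eq_two] using h2.mul hu)
  have hi' : i ^ 2 + 1 = 0 := by simpa using hi
  exact ⟨i, by linear_combination hi'⟩

lemma exists_mul_self_eq_neg_one_of_field {K : Type*} [Field K] [Algebra ℝ K]
    [FiniteDimensional ℝ K] (hK : IsEmpty (K →ₐ[ℝ] ℝ)) : ∃ i : K, i * i = -1 := by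
  have : Algebra.IsAlgebraic ℝ K := Algebra.IsAlgebraic.of_finite ℝ K
  obtain ⟨⟨e⟩⟩ | ⟨⟨e⟩⟩ := Real.nonempty_algEquiv_or K
  · exact hK.elim e.toAlgHom
  · exact ⟨e.symm Complex.I, by rw [← map_mul, Complex.I_mul_I, map_neg, map_one]⟩

lemma exists_mul_self_eq_neg_one_of_isEmpty_algHom {B : Type*} [CommRing B] [Algebra ℝ B]
    [FiniteDimensional ℝ B] (hB : IsEmpty (B →ₐ[ℝ] ℝ)) : ∃ i : B, i * i = -1 := by
  have : IsArtinianRing B := IsArtinianRing.of_finite ℝ B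
  have residue : ∀ m : MaximalSpectrum B, ∃ j : B ⧸ m.asIdeal, j * j = -1 := fun m => by
    have := m.isMaximal
    let : Field (B ⧸ m.asIdeal) := Ideal.Quotient.field _
    exact exists_mul_self_eq_neg_one_of_field
      ⟨fun f => hB.elim (f.comp (Ideal.Quotient.mkₐ ℝ m.asIdeal))⟩
  choose j hj using residue
  obtain ⟨y, hy⟩ := (IsArtinianRing.quotNilradicalEquivPi B).surjective j
  obtain ⟨x, rfl⟩ := Ideal.Quotient.mk_surjective y
  have hx : IsNilpotent (x * x + 1) := by
    rw [← mem_nilradical, ← Ideal.Quotient.eq_zero_iff_mem]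
    apply (IsArtinianRing.quotNilradicalEquivPi B).injective
    rw [map_add, map_mul, map_one, map_add, map_mul, hy, map_one, map_zero]
    funext m
    simp [hj]
  have h2 : IsUnit (2 : B) := by
    simpa only [map_ofNat] using (IsUnit.mk0 (2 : ℝ) two_ne_zero).map (algebraMap ℝ B)
  exact exists_mul_self_eq_neg_one_of_isNilpotent h2 hx

end RealAlgebra

section Semidefinite

variable {K E : Type*} [Field K] [LinearOrder K] [IsStrictOrderedRing K]
  [AddCommGroup E] [Module K E]

lemma mem_ker_of_apply_self_eq_zero {b : LinearMap.BilinForm K E} (hb : b.IsPosSemidef) {u : E}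
    (hu : b u u = 0) : u ∈ LinearMap.ker b :=
  (LinearMap.BilinForm.apply_apply_same_eq_zero_iff b hb.nonneg
    (LinearMap.BilinForm.isSymm_iff.1 hb.isSymm)).1 hu

lemma apply_eq_zero_of_apply_self_eq_zero {b : LinearMap.BilinForm K E} (hb : b.IsSymm)
    {V : Submodule K E} (hV : ∀ v ∈ V, 0 ≤ b v v) {v w : E} (hv : v ∈ V) (h0 : b v v = 0)
    (hw : w ∈ V) : b v w = 0 :=
  have hpsd : (b.restrict V).IsPosSemidef := ⟨hb.restrict V, ⟨fun u => hV u u.2⟩⟩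
  DFunLike.congr_fun (mem_ker_of_apply_self_eq_zero hpsd (u := ⟨v, hv⟩) h0) ⟨w, hw⟩

lemma finrank_add_finrank_le_of_semidefinite [FiniteDimensional K E]
    {b : LinearMap.BilinForm K E} (hb : b.IsSymm) (hnd : b.Nondegenerate) {V W : Submodule K E}
    (hV : ∀ v ∈ V, 0 ≤ b v v) (hW : ∀ w ∈ W, b w w ≤ 0) :
    Module.finrank K V + Module.finrank K W ≤ Module.finrank K E := by
  have hinf : V ⊓ W ≤ b.orthogonal (V ⊔ W) := by
    rintro v ⟨hvV, hvW⟩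
    have h0 : b v v = 0 := le_antisymm (hW v hvW) (hV v hvV)
    rw [LinearMap.BilinForm.mem_orthogonal_iff]
    intro n hn
    obtain ⟨a, ha, c, hc, rfl⟩ := Submodule.mem_sup.1 hn
    have hva : b v a = 0 := apply_eq_zero_of_apply_self_eq_zero hb hV hvV h0 ha
    have hvc : (-b) v c = 0 := apply_eq_zero_of_apply_self_eq_zero hb.neg
      (fun w hw => neg_nonneg.2 (hW w hw)) hvW (by simp [h0]) hc
    simpa [hb.eq a v, hb.eq c v, hva] using hvc
  have h1 := Submodule.finrank_sup_add_finrank_inf_eq V W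
  have h2 := Submodule.finrank_mono hinf
  have h3 := LinearMap.BilinForm.finrank_orthogonal hnd (V ⊔ W)
  have h4 := Submodule.finrank_le (V ⊔ W)
  lia

end Semidefinite

section MulForm

/-- The bilinear form `(a, b) ↦ L (a * b)` attached to a linear functional `L` on an algebra. -/
def mulForm (K A : Type*) [CommRing K] [CommRing A] [Algebra K A] :
    Module.Dual K A →ₗ[K] LinearMap.BilinForm K A where
  toFun L := (LinearMap.mul K A).compr₂ L
  map_add' _ _ := rfl
  map_smul' _ _ := rfl

section CommRing

variable {K A : Type*} [CommRing K] [CommRing A] [Algebra K A]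

@[simp]
lemma mulForm_apply (L : Module.Dual K A) (a b : A) : mulForm K A L a b = L (a * b) := rfl

lemma isSymm_mulForm (L : Module.Dual K A) : (mulForm K A L).IsSymm :=
  ⟨fun a b => by simp [mul_comm]⟩

end CommRing

lemma two_mul_finrank_le_of_mul_self_eq_neg_one {K B : Type*} [Field K] [LinearOrder K]
    [IsStrictOrderedRing K] [CommRing B] [Algebra K B] [FiniteDimensional K B] {i : B}
    (hi : i * i = -1) {L : Module.Dual K B} (hL : (mulForm K B L).Nondegenerate)
    {V : Submodule K B} (hV : ∀ v ∈ V, 0 ≤ L (v * v)) :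
    2 * Module.finrank K V ≤ Module.finrank K B := by
  have hinj : Function.Injective (LinearMap.mulLeft K i) := fun u v (h : i * u = i * v) => by
    linear_combination (-i) * h + (u - v) * hi
  have hneg : ∀ w ∈ V.map (LinearMap.mulLeft K i), mulForm K B L w w ≤ 0 := by
    rintro _ ⟨v, hv, rfl⟩
    have hsq : i * v * (i * v) = -(v * v) := by linear_combination v * v * hi
    simpa [hsq] using hV v hv
  have := finrank_add_finrank_le_of_semidefinite (isSymm_mulForm L) hL hV hneg
  rwa [← (Submodule.equivMapOfInjective _ hinj V).finrank_eq, ← two_mul] at this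

end MulForm

section Extremal

variable {E : Type*} [AddCommGroup E] [Module ℝ E] [FiniteDimensional ℝ E]

lemma exists_rayleigh_max_of_posDef [Nontrivial E] {b : LinearMap.BilinForm ℝ E} (hs : b.IsSymm)
    (hpos : ∀ u, u ≠ 0 → 0 < b u u) (b' : LinearMap.BilinForm ℝ E) :
    ∃ M : ℝ, (∀ v, b' v v ≤ M * b v v) ∧ ∃ u, u ≠ 0 ∧ b' u u = M * b u u := by
  let core : InnerProductSpace.Core ℝ E :=
    { inner := fun u v => b u v
      conj_inner_symm := fun u v => by simp [hs.eq u v]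
      re_inner_nonneg := fun u => by
        by_cases h : u = 0
        · simp [h]
        · simpa using (hpos u h).le
      add_left := fun u v w => by simp
      smul_left := fun u v r => by simp
      definite := fun u h => by
        by_contra hu
        exact (hpos u hu).ne' h }
  let : NormedAddCommGroup E := core.toNormedAddCommGroup
  let : InnerProductSpace ℝ E := InnerProductSpace.ofCore core.toCore
  have hnorm : ∀ u : E, b u u = ‖u‖ ^ 2 := fun u => real_inner_self_eq_norm_sq u
  have : ProperSpace E := FiniteDimensional.proper ℝ E
  have hcont : Continuous fun u : E => b' u u :=
    (LinearMap.continuous_of_finiteDimensional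
      (LinearMap.toContinuousLinearMap.toLinearMap ∘ₗ b')).clm_apply continuous_id
  obtain ⟨u, hu, hmax⟩ := (isCompact_sphere (0 : E) 1).exists_isMaxOn
    (NormedSpace.sphere_nonempty.2 zero_le_one) hcont.continuousOn
  have hu1 : ‖u‖ = 1 := by simpa using hu
  refine ⟨b' u u, fun v => ?_, u, norm_ne_zero_iff.1 (by simp [hu1]), by simp [hnorm, hu1]⟩
  obtain rfl | hv := eq_or_ne v 0
  · simp
  have hv' : ‖v‖ ≠ 0 := norm_ne_zero_iff.2 hv
  have hle : ‖v‖⁻¹ * (‖v‖⁻¹ * b' v v) ≤ b' u u := by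
    simpa using hmax (a := ‖v‖⁻¹ • v) (by simp [norm_smul, hv'])
  calc b' v v = ‖v‖⁻¹ * (‖v‖⁻¹ * b' v v) * ‖v‖ ^ 2 := by field_simp
    _ ≤ b' u u * b v v := by rw [hnorm]; gcongr

lemma exists_rayleigh_max_of_ker_le {b b' : LinearMap.BilinForm ℝ E} (hb : b.IsPosSemidef)
    (hb0 : b ≠ 0) (hb' : b'.IsSymm) (hker : LinearMap.ker b ≤ LinearMap.ker b') :
    ∃ M : ℝ, (∀ v, b' v v ≤ M * b v v) ∧ ∃ u ∉ LinearMap.ker b, b' u u = M * b u u := by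
  obtain ⟨U, hU⟩ := Submodule.exists_isCompl (LinearMap.ker b)
  have hUker : ∀ u ∈ U, u ∈ LinearMap.ker b → u = 0 := fun u hu hk =>
    Submodule.disjoint_def.1 hU.disjoint u hk hu
  have : Nontrivial U := by
    rw [Submodule.nontrivial_iff_ne_bot]
    rintro rfl
    exact hb0 (LinearMap.ker_eq_top.1 (by simpa using hU.sup_eq_top))
  obtain ⟨M, hM, u, hu0, hu⟩ := exists_rayleigh_max_of_posDef (b := b.restrict U)
    (hb.isSymm.restrict U)
    (fun u hu => (hb.nonneg u.1).lt_of_ne fun h => hu (Subtype.ext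
      (hUker u u.2 (mem_ker_of_apply_self_eq_zero hb h.symm)))) (b'.restrict U)
  refine ⟨M, fun v => ?_, u, fun h => hu0 (Subtype.ext (hUker u u.2 h)), hu⟩
  obtain ⟨k, hk, w, hw, rfl⟩ := Submodule.mem_sup.1 (hU.sup_eq_top ▸ Submodule.mem_top (x := v))
  have hk' := hker hk
  rw [LinearMap.mem_ker] at hk hk'
  simpa [hk, hk', hb.isSymm.eq w k, hb'.eq w k] using hM ⟨w, hw⟩

lemma exists_posSemidef_forall_ker_le {𝓑 : Submodule ℝ (LinearMap.BilinForm ℝ E)}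
    (hsymm : ∀ b ∈ 𝓑, b.IsSymm) {b₀ : LinearMap.BilinForm ℝ E} (hb₀ : b₀ ∈ 𝓑)
    (hpsd₀ : b₀.IsPosSemidef) (hne₀ : b₀ ≠ 0) :
    ∃ b ∈ 𝓑, b.IsPosSemidef ∧ b ≠ 0 ∧ LinearMap.ker b₀ ≤ LinearMap.ker b ∧
      ∀ b' ∈ 𝓑, LinearMap.ker b ≤ LinearMap.ker b' → ∃ c : ℝ, b' = c • b := by
  obtain ⟨_, ⟨b, hb, hpsd, hne, hle, rfl⟩, hmax⟩ := wellFounded_gt.has_min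
    {W | ∃ b ∈ 𝓑, b.IsPosSemidef ∧ b ≠ 0 ∧ LinearMap.ker b₀ ≤ LinearMap.ker b ∧
      LinearMap.ker b = W} ⟨_, b₀, hb₀, hpsd₀, hne₀, le_rfl, rfl⟩
  refine ⟨b, hb, hpsd, hne, hle, fun b' hb' hker => ?_⟩
  obtain ⟨M, hM, u, hu, hMu⟩ := exists_rayleigh_max_of_ker_le hpsd hne (hsymm b' hb') hker
  refine ⟨M, by_contra fun hcon => ?_⟩
  have hmem : M • b - b' ∈ 𝓑 := by
    have hsub : M • b - b' = M • b + (-1 : ℝ) • b' := by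
      ext u v
      simp [sub_eq_add_neg]
    exact hsub ▸ 𝓑.add_mem (𝓑.smul_mem M hb) (𝓑.smul_mem (-1) hb')
  have hpsd' : (M • b - b').IsPosSemidef :=
    ⟨hsymm _ hmem, ⟨fun v => by simpa using hM v⟩⟩
  have hker' : LinearMap.ker b ≤ LinearMap.ker (M • b - b') := fun v hv => by
    simp [LinearMap.mem_ker.1 hv, LinearMap.mem_ker.1 (hker hv)]
  have hu' : u ∈ LinearMap.ker (M • b - b') :=
    mem_ker_of_apply_self_eq_zero hpsd' (by simp [hMu])
  exact hmax _ ⟨_, hmem, hpsd', fun h => hcon (sub_eq_zero.1 h).symm, hle.trans hker', rfl⟩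
    (hker'.lt_of_not_ge fun h => hu (h hu'))

end Extremal

section Homogeneous

variable {σ R : Type*} [CommRing R]

lemma homogeneousComponent_mul_of_isHomogeneous {p : MvPolynomial σ R} {n : ℕ}
    (hp : p.IsHomogeneous n) (m : ℕ) (a : MvPolynomial σ R) :
    homogeneousComponent (m + n) (a * p) = homogeneousComponent m a * p := by
  let := MvPolynomial.gradedAlgebra (σ := σ) (R := R)
  simpa only [DirectSum.Decomposition.decompose'_eq, ← decomposition.decompose'_apply] using
    DirectSum.coe_decompose_mul_add_of_right_mem (homogeneousSubmodule σ R) (a := a) (i := m) hp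

instance finite_homogeneousSubmodule [Finite σ] (n : ℕ) :
    Module.Finite R (homogeneousSubmodule σ R n) :=
  Module.Finite.iff_fg.2 (homogeneousSubmodule_fg σ R n)

end Homogeneous

section Line

variable {R : Type*} [CommRing R]

/-- Restriction of a ternary polynomial to the line `z = 0`, in the chart `y = 1` of that line. -/
noncomputable def restrictLine : MvPolynomial (Fin 3) R →ₐ[R] Polynomial R :=
  aeval ![Polynomial.X, 1, 0]

@[simp] lemma restrictLine_X_zero : restrictLine (X 0 : MvPolynomial (Fin 3) R) = Polynomial.X := by
  simp [restrictLine]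

@[simp] lemma restrictLine_X_one : restrictLine (X 1 : MvPolynomial (Fin 3) R) = 1 := by
  simp [restrictLine]

@[simp] lemma restrictLine_X_two : restrictLine (X 2 : MvPolynomial (Fin 3) R) = 0 := by
  simp [restrictLine]

lemma natDegree_restrictLine_le {f : MvPolynomial (Fin 3) R} {n : ℕ} (hf : f.IsHomogeneous n) :
    (restrictLine f).natDegree ≤ n := by
  refine (aeval_natDegree_le (n := 1) f hf.totalDegree_le _ fun i => ?_).trans (by simp)
  fin_cases i <;> simp [Polynomial.natDegree_X_le]

lemma exists_isHomogeneous_restrictLine_eq {c : Polynomial R} {n : ℕ} (hc : c.natDegree ≤ n) :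
    ∃ f : MvPolynomial (Fin 3) R, f.IsHomogeneous n ∧ restrictLine f = c := by
  refine ⟨rename Fin.castSucc (c.homogenize n),
    (Polynomial.isHomogeneous_homogenize c).rename_isHomogeneous, ?_⟩
  conv_rhs => rw [← Polynomial.aeval_homogenize_X_one c hc]
  rw [restrictLine, aeval_rename]
  congr 2
  ext i
  fin_cases i <;> simp

lemma aeval_X_zero_X_one_zero_eq_zero {f : MvPolynomial (Fin 3) R} {n : ℕ}
    (hf : f.IsHomogeneous n) (h : restrictLine f = 0) :
    aeval ![(X 0 : MvPolynomial (Fin 2) R), X 1, 0] f = 0 := by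
  suffices (restrictLine f).homogenize n = aeval ![(X 0 : MvPolynomial (Fin 2) R), X 1, 0] f by
    rw [← this, h, Polynomial.homogenize_zero]
  apply Polynomial.homogenize_eq_of_isHomogeneous
  · have hdeg := hf.aeval (n := 1) ![(X 0 : MvPolynomial (Fin 2) R), X 1, 0] fun i => by
      fin_cases i
      · exact isHomogeneous_X _ _
      · exact isHomogeneous_X _ _
      · exact isHomogeneous_zero _ _ _
    rwa [one_mul] at hdeg
  · rw [restrictLine, ← AlgHom.comp_apply]
    congr 1
    ext i
    fin_cases i <;> simp

lemma X_two_dvd_of_restrictLine_eq_zero {f : MvPolynomial (Fin 3) R} {n : ℕ}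
    (hf : f.IsHomogeneous n) (h : restrictLine f = 0) : X 2 ∣ f := by
  have hmk : Ideal.Quotient.mkₐ R (Ideal.span {(X 2 : MvPolynomial (Fin 3) R)}) =
      ((Ideal.Quotient.mkₐ R _).comp (rename Fin.castSucc)).comp
        (aeval ![(X 0 : MvPolynomial (Fin 2) R), X 1, 0]) := by
    ext i
    fin_cases i <;> simp
  rw [← Ideal.mem_span_singleton, ← Ideal.Quotient.eq_zero_iff_mem, ← Ideal.Quotient.mkₐ_eq_mk R,
    hmk, AlgHom.comp_apply, aeval_X_zero_X_one_zero_eq_zero hf h, map_zero]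

lemma exists_eq_X_two_mul {f : MvPolynomial (Fin 3) R} {n : ℕ} (hf : f.IsHomogeneous (n + 1))
    (h : restrictLine f = 0) :
    ∃ g : MvPolynomial (Fin 3) R, g.IsHomogeneous n ∧ f = X 2 * g := by
  obtain ⟨g, rfl⟩ := X_two_dvd_of_restrictLine_eq_zero hf h
  refine ⟨homogeneousComponent n g, homogeneousComponent_isHomogeneous n g, ?_⟩
  have hcomp := homogeneousComponent_mul_of_isHomogeneous (isHomogeneous_X R 2) n g
  rwa [mul_comm g, homogeneousComponent_eq_self hf, mul_comm _ (X 2)] at hcomp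

end Line

section BoundedDegree

variable {F : Type*} [Field F]

lemma mem_degreeLT_succ {c : Polynomial F} {n : ℕ} :
    c ∈ Polynomial.degreeLT F (n + 1) ↔ c.natDegree ≤ n := by
  rw [Polynomial.degreeLT_succ_eq_degreeLE, Polynomial.mem_degreeLE,
    Polynomial.natDegree_le_iff_degree_le]

instance finite_degreeLT (n : ℕ) : Module.Finite F (Polynomial.degreeLT F n) :=
  Module.Finite.equiv (Polynomial.degreeLTEquiv F n).symm

lemma finrank_degreeLT (n : ℕ) : Module.finrank F (Polynomial.degreeLT F n) = n := by
  rw [(Polynomial.degreeLTEquiv F n).finrank_eq, Module.finrank_fin_fun]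

lemma finrank_lt_finrank_of_X_mul_mem {K K' : Submodule F (Polynomial F)}
    [FiniteDimensional F K'] {n : ℕ} (hn : K ≤ Polynomial.degreeLT F n) (hne : K ≠ ⊥)
    (hle : K ≤ K') (hX : ∀ c ∈ K, Polynomial.X * c ∈ K') :
    Module.finrank F K < Module.finrank F K' := by
  refine Submodule.finrank_lt_finrank_of_lt (hle.lt_of_ne ?_)
  rintro rfl
  obtain ⟨c, hc, hc0⟩ := Submodule.exists_mem_ne_zero_of_ne_bot hne
  have hpow : ∀ j, Polynomial.X ^ j * c ∈ K := fun j => by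
    induction j with
    | zero => simpa using hc
    | succ j ih => simpa only [pow_succ', mul_assoc] using hX _ ih
  have hdeg := Polynomial.mem_degreeLT.1 (hn (hpow n))
  rw [Polynomial.degree_mul, Polynomial.degree_X_pow, Polynomial.degree_eq_natDegree hc0] at hdeg
  norm_cast at hdeg
  lia

lemma two_mul_succ_le_finrank_of_isCoprime {p q : Polynomial F} (hpq : IsCoprime p q) {m : ℕ}
    (hm : m < p.natDegree) {K : Submodule F (Polynomial F)} [FiniteDimensional F K]
    (hp : ∀ c : Polynomial F, c.natDegree ≤ m → c * p ∈ K)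
    (hq : ∀ c : Polynomial F, c.natDegree ≤ m → c * q ∈ K) :
    2 * (m + 1) ≤ Module.finrank F K := by
  let P := Polynomial.degreeLT F (m + 1)
  let f : (P × P) →ₗ[F] K := LinearMap.codRestrict K
    ((LinearMap.mulRight F p ∘ₗ P.subtype).coprod (LinearMap.mulRight F q ∘ₗ P.subtype))
    fun c => K.add_mem (hp _ (mem_degreeLT_succ.1 c.1.2)) (hq _ (mem_degreeLT_succ.1 c.2.2))
  have hf : Function.Injective f := by
    rw [← LinearMap.ker_eq_bot, LinearMap.ker_eq_bot']
    rintro ⟨⟨a, ha⟩, ⟨b, hb⟩⟩ hab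
    have h : a * p + b * q = 0 := congrArg Subtype.val hab
    have hp0 : p ≠ 0 := Polynomial.ne_zero_of_natDegree_gt hm
    have hb0 : b = 0 := Polynomial.eq_zero_of_dvd_of_natDegree_lt
      (hpq.dvd_of_dvd_mul_right ⟨-a, by linear_combination h⟩)
      ((mem_degreeLT_succ.1 hb).trans_lt hm)
    have ha0 : a = 0 := by simpa [hb0, hp0] using h
    simp [ha0, hb0]
  have hle := LinearMap.finrank_le_finrank_of_injective hf
  rw [Module.finrank_prod, finrank_degreeLT] at hle
  lia

end BoundedDegree

section Arithmetic

lemma apply_add_le_of_antitone_below {h : ℕ → ℕ} (hanti : ∀ n, h n ≤ n → h (n + 1) ≤ h n) {n : ℕ}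
    (hn : h n ≤ n) (j : ℕ) : h (n + j) ≤ h n := by
  induction j with
  | zero => rfl
  | succ j ih => exact (hanti (n + j) (by lia)).trans ih

lemma sum_range_lt_two_mul_sum_range {h : ℕ → ℕ} {D : ℕ} (hD : 0 < D) (h0 : 0 < h 0)
    (hanti : ∀ n, h n ≤ n → h (n + 1) ≤ h n) (hlt : ∀ m < D, h (D + m) + m < D) :
    ∑ i ∈ Finset.range (2 * D), h i < 2 * ∑ i ∈ Finset.range (D + 1), h i := by
  obtain ⟨e, rfl⟩ := Nat.exists_eq_add_of_lt hD
  simp only [zero_add] at *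
  have reflect_le : ∀ j < e, h (e + 2 + j) ≤ h (e - 1 - j + 1) := fun j hj => by
    by_cases hle : h (e - 1 - j + 1) ≤ e - 1 - j + 1
    · convert apply_add_le_of_antitone_below hanti hle (2 * (j + 1)) using 2
      lia
    · have := hlt (j + 1) (by lia)
      rw [show e + 1 + (j + 1) = e + 2 + j by lia] at this
      lia
  have tail_le : ∑ j ∈ Finset.range e, h (e + 2 + j) ≤ ∑ j ∈ Finset.range e, h (j + 1) := by
    rw [← Finset.sum_range_reflect (fun j => h (j + 1))]
    exact Finset.sum_le_sum fun j hj => reflect_le j (Finset.mem_range.1 hj)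
  have split : ∑ i ∈ Finset.range (2 * (e + 1)), h i =
      ∑ i ∈ Finset.range (e + 2), h i + ∑ j ∈ Finset.range e, h (e + 2 + j) := by
    rw [← Finset.sum_range_add, show e + 2 + e = 2 * (e + 1) by ring]
  have head : ∑ i ∈ Finset.range (e + 2), h i =
      ∑ j ∈ Finset.range e, h (j + 1) + h 0 + h (e + 1) := by
    rw [Finset.sum_range_succ, Finset.sum_range_succ']
  lia

end Arithmetic

section HilbertFunction

variable {F : Type*} [Field F]

lemma finrank_map_add_finrank_inf_ker {V W : Type*} [AddCommGroup V] [Module F V]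
    [AddCommGroup W] [Module F W] (f : V →ₗ[F] W) (M : Submodule F V) [FiniteDimensional F M] :
    Module.finrank F (M.map f) + Module.finrank F ↥(M ⊓ LinearMap.ker f) = Module.finrank F M := by
  rw [← (f.domRestrict M).finrank_range_add_finrank_ker, LinearMap.range_domRestrict,
    LinearMap.ker_domRestrict,
    (Submodule.equivSubtypeMap M ((LinearMap.ker f).comap M.subtype)).finrank_eq,
    Submodule.map_comap_subtype]

lemma finrank_map_restrictLine_add_finrank {M M' : Submodule F (MvPolynomial (Fin 3) F)} {n : ℕ}
    (hM : M ≤ homogeneousSubmodule (Fin 3) F n) (hM' : M' ≤ homogeneousSubmodule (Fin 3) F (n + 1))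
    (h : ∀ g ∈ homogeneousSubmodule (Fin 3) F n, X 2 * g ∈ M' ↔ g ∈ M) :
    Module.finrank F (M'.map restrictLine.toLinearMap) + Module.finrank F M =
      Module.finrank F M' := by
  have : FiniteDimensional F M' := Submodule.finiteDimensional_of_le hM'
  have hinj : Function.Injective (LinearMap.mulLeft F (X 2 : MvPolynomial (Fin 3) F)) :=
    mul_right_injective₀ (X_ne_zero 2)
  have hker : M' ⊓ LinearMap.ker restrictLine.toLinearMap = M.map (LinearMap.mulLeft F (X 2)) := by
    ext f
    constructor
    · rintro ⟨hf, hf0⟩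
      obtain ⟨g, hg, rfl⟩ := exists_eq_X_two_mul (hM' hf) hf0
      exact ⟨g, (h g hg).1 hf, rfl⟩
    · rintro ⟨g, hg, rfl⟩
      exact ⟨(h g (hM hg)).2 hg, by simp⟩
  rw [← finrank_map_add_finrank_inf_ker restrictLine.toLinearMap M', hker,
    (Submodule.equivMapOfInjective _ hinj M).finrank_eq]

lemma finrank_homogeneousSubmodule_succ (n : ℕ) :
    Module.finrank F (homogeneousSubmodule (Fin 3) F (n + 1)) =
      n + 2 + Module.finrank F (homogeneousSubmodule (Fin 3) F n) := by
  have hmap : (homogeneousSubmodule (Fin 3) F (n + 1)).map restrictLine.toLinearMap =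
      Polynomial.degreeLT F (n + 2) := by
    ext c
    rw [mem_degreeLT_succ]
    exact ⟨fun ⟨f, hf, hc⟩ => hc ▸ natDegree_restrictLine_le hf,
      exists_isHomogeneous_restrictLine_eq⟩
  rw [← finrank_map_restrictLine_add_finrank le_rfl le_rfl fun g hg => iff_of_true ?_ hg, hmap,
    finrank_degreeLT]
  simpa only [mem_homogeneousSubmodule, add_comm n] using (isHomogeneous_X F 2).mul hg

variable {B : Type*} [CommRing B] [Algebra F B] (π : MvPolynomial (Fin 3) F →ₐ[F] B)

/-- The forms of degree `n` killed by `π`. When `π` sends `z` to `1`, these are the forms of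
degree `n` vanishing on the affine scheme `Spec B` in the chart `z = 1`. -/
noncomputable def vanishingForms (n : ℕ) : Submodule F (MvPolynomial (Fin 3) F) :=
  homogeneousSubmodule (Fin 3) F n ⊓ LinearMap.ker π.toLinearMap

variable {π}

lemma mem_vanishingForms {n : ℕ} {f : MvPolynomial (Fin 3) F} :
    f ∈ vanishingForms π n ↔ f.IsHomogeneous n ∧ π f = 0 := Iff.rfl

lemma mul_mem_vanishingForms {m n : ℕ} {f g : MvPolynomial (Fin 3) F} (hf : f.IsHomogeneous m)
    (hg : g ∈ vanishingForms π n) : f * g ∈ vanishingForms π (m + n) :=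
  ⟨hf.mul hg.1, by simp [mem_vanishingForms.1 hg]⟩

variable (π)

/-- The restrictions to the line `z = 0` of the forms in `vanishingForms π n`. -/
noncomputable def leadingForms (n : ℕ) : Submodule F (Polynomial F) :=
  (vanishingForms π n).map restrictLine.toLinearMap

instance finite_leadingForms (n : ℕ) : Module.Finite F (leadingForms π n) :=
  have : FiniteDimensional F (vanishingForms π n) := Submodule.finiteDimensional_of_le inf_le_left
  Module.Finite.map _ _

/-- The image in `B` of the forms of degree `n`. -/
noncomputable def formsImage (n : ℕ) : Submodule F B :=
  (homogeneousSubmodule (Fin 3) F n).map π.toLinearMap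

instance finite_formsImage (n : ℕ) : Module.Finite F (formsImage π n) :=
  Module.Finite.map _ _

lemma leadingForms_le_degreeLT (n : ℕ) : leadingForms π n ≤ Polynomial.degreeLT F (n + 1) := by
  rintro _ ⟨f, hf, rfl⟩
  exact mem_degreeLT_succ.2 (natDegree_restrictLine_le hf.1)

variable {π}

lemma mul_mem_leadingForms {m n : ℕ} {c e : Polynomial F} (hc : c.natDegree ≤ m)
    (he : e ∈ leadingForms π n) : c * e ∈ leadingForms π (m + n) := by
  obtain ⟨f, hf, rfl⟩ := exists_isHomogeneous_restrictLine_eq hc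
  obtain ⟨g, hg, rfl⟩ := he
  exact ⟨f * g, mul_mem_vanishingForms hf hg, map_mul restrictLine f g⟩

variable (π)

lemma finrank_leadingForms_le (n : ℕ) : Module.finrank F (leadingForms π n) ≤ n + 1 :=
  (Submodule.finrank_mono (leadingForms_le_degreeLT π n)).trans_eq (finrank_degreeLT _)

lemma leadingForms_zero [Nontrivial B] : leadingForms π 0 = ⊥ := by
  rw [eq_bot_iff]
  rintro _ ⟨f, hf, rfl⟩
  obtain ⟨hf0, hπ⟩ := mem_vanishingForms.1 hf
  rw [totalDegree_eq_zero_iff_eq_C.1 ((totalDegree_zero_iff_isHomogeneous _).2 hf0)] at hπ ⊢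
  rw [← algebraMap_eq, AlgHom.commutes, map_eq_zero] at hπ
  simp [hπ]

lemma finrank_leadingForms_add_one_le (n : ℕ) (h : leadingForms π n ≠ ⊥) :
    Module.finrank F (leadingForms π n) + 1 ≤ Module.finrank F (leadingForms π (n + 1)) := by
  refine finrank_lt_finrank_of_X_mul_mem (leadingForms_le_degreeLT π n) h
    (fun c hc => ?_) fun c hc => ?_
  · simpa [add_comm] using mul_mem_leadingForms (c := 1) (m := 1) (by simp) hc
  · simpa [add_comm] using mul_mem_leadingForms Polynomial.natDegree_X_le hc

/-- The codimension of `leadingForms π n` in the polynomials of degree at most `n`: the Hilbert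
function of the quotient by the homogeneous ideal of leading forms. -/
noncomputable def hilbertDiff (n : ℕ) : ℕ := n + 1 - Module.finrank F (leadingForms π n)

lemma hilbertDiff_zero [Nontrivial B] : hilbertDiff π 0 = 1 := by
  rw [hilbertDiff, leadingForms_zero, finrank_bot]

lemma hilbertDiff_succ_le (n : ℕ) (h : hilbertDiff π n ≤ n) :
    hilbertDiff π (n + 1) ≤ hilbertDiff π n := by
  have hne : leadingForms π n ≠ ⊥ := fun h0 => by simp [hilbertDiff, h0] at h
  have := finrank_leadingForms_add_one_le π n hne
  simp only [hilbertDiff]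
  lia

variable {π}

lemma hilbertDiff_add_add_lt {p q : MvPolynomial (Fin 3) F} {D m : ℕ}
    (hp : p ∈ vanishingForms π D) (hq : q ∈ vanishingForms π D)
    (hdeg : (restrictLine p).natDegree = D) (hpq : IsCoprime (restrictLine p) (restrictLine q))
    (hm : m < D) : hilbertDiff π (D + m) + m < D := by
  have hmul {f} (hf : f ∈ vanishingForms π D) (c : Polynomial F) (hc : c.natDegree ≤ m) :
      c * restrictLine f ∈ leadingForms π (D + m) :=
    add_comm m D ▸ mul_mem_leadingForms hc (Submodule.mem_map_of_mem hf)
  have := two_mul_succ_le_finrank_of_isCoprime hpq (hdeg.symm ▸ hm) (hmul hp) (hmul hq)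
  simp only [hilbertDiff]
  lia

lemma X_two_mul_mem_vanishingForms_iff (hz : π (X 2) = 1) {n : ℕ} {g : MvPolynomial (Fin 3) F}
    (hg : g.IsHomogeneous n) : X 2 * g ∈ vanishingForms π (n + 1) ↔ g ∈ vanishingForms π n := by
  have hXg : (X 2 * g).IsHomogeneous (n + 1) := by
    simpa only [add_comm n] using (isHomogeneous_X F 2).mul hg
  simp [mem_vanishingForms, hz, hg, hXg]

lemma finrank_formsImage_succ (hz : π (X 2) = 1) (n : ℕ) :
    Module.finrank F (formsImage π (n + 1)) =
      Module.finrank F (formsImage π n) + hilbertDiff π (n + 1) := by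
  have hA := finrank_homogeneousSubmodule_succ (F := F) n
  have hK : Module.finrank F (leadingForms π (n + 1)) + Module.finrank F (vanishingForms π n) =
      Module.finrank F (vanishingForms π (n + 1)) :=
    finrank_map_restrictLine_add_finrank inf_le_left inf_le_left fun _ hg =>
      X_two_mul_mem_vanishingForms_iff hz hg
  have hV (n) : Module.finrank F (formsImage π n) + Module.finrank F (vanishingForms π n) =
      Module.finrank F (homogeneousSubmodule (Fin 3) F n) :=
    finrank_map_add_finrank_inf_ker _ _
  have h0 := hV n
  have h1 := hV (n + 1)
  have hle := finrank_leadingForms_le π (n + 1)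
  simp only [hilbertDiff]
  lia

lemma formsImage_zero : formsImage π 0 = F ∙ 1 := by
  rw [formsImage, homogeneousSubmodule_zero, Submodule.map_one, Submodule.one_eq_span]

lemma finrank_formsImage [Nontrivial B] (hz : π (X 2) = 1) (n : ℕ) :
    Module.finrank F (formsImage π n) = ∑ i ∈ Finset.range (n + 1), hilbertDiff π i := by
  induction n with
  | zero =>
    rw [formsImage_zero, finrank_span_singleton one_ne_zero, Finset.sum_range_one,
      hilbertDiff_zero]
  | succ n ih => rw [finrank_formsImage_succ hz, ih, Finset.sum_range_succ _ (n + 1)]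

lemma monotone_formsImage (hz : π (X 2) = 1) : Monotone (formsImage π) := by
  refine monotone_nat_of_le_succ fun n => ?_
  rintro _ ⟨f, hf, rfl⟩
  refine ⟨X 2 * f, ?_, by simp [hz]⟩
  simpa only [SetLike.mem_coe, mem_homogeneousSubmodule, add_comm n] using
    (isHomogeneous_X F 2).mul hf

lemma exists_mem_formsImage (hz : π (X 2) = 1) (hπ : Function.Surjective π) (b : B) :
    ∃ n, b ∈ formsImage π n := by
  obtain ⟨f, rfl⟩ := hπ b
  refine ⟨f.totalDegree, ?_⟩
  conv in π f => rw [← sum_homogeneousComponent f, map_sum]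
  exact Submodule.sum_mem _ fun i hi =>
    monotone_formsImage hz (Nat.lt_succ_iff.1 (Finset.mem_range.1 hi))
      (Submodule.mem_map_of_mem (homogeneousComponent_isHomogeneous i f))

lemma formsImage_eq_top [Nontrivial B] (hz : π (X 2) = 1) (hπ : Function.Surjective π) {n : ℕ}
    (hn : hilbertDiff π n = 0) : formsImage π n = ⊤ := by
  have hstable (j : ℕ) : formsImage π n = formsImage π (n + j) := by
    refine Submodule.eq_of_le_of_finrank_eq (monotone_formsImage hz (n.le_add_right j)) ?_
    rw [finrank_formsImage hz, finrank_formsImage hz, add_right_comm,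
      Finset.sum_range_add _ (n + 1), left_eq_add, Finset.sum_eq_zero_iff]
    intro i _
    have := apply_add_le_of_antitone_below (hilbertDiff_succ_le π) (n := n) (by lia) (1 + i)
    rw [← add_assoc] at this
    lia
  refine eq_top_iff.2 fun b _ => ?_
  obtain ⟨m, hm⟩ := exists_mem_formsImage hz hπ b
  rw [hstable m]
  exact monotone_formsImage hz (m.le_add_left n) hm

lemma finiteDimensional_and_finrank_lt_two_mul_finrank_formsImage [Nontrivial B]
    (hz : π (X 2) = 1) (hπ : Function.Surjective π) {p q : MvPolynomial (Fin 3) F} {D : ℕ}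
    (hD : 0 < D) (hp : p ∈ vanishingForms π D) (hq : q ∈ vanishingForms π D)
    (hdeg : (restrictLine p).natDegree = D) (hpq : IsCoprime (restrictLine p) (restrictLine q)) :
    FiniteDimensional F B ∧ Module.finrank F B < 2 * Module.finrank F (formsImage π D) := by
  have hlt : ∀ m < D, hilbertDiff π (D + m) + m < D := fun m hm =>
    hilbertDiff_add_add_lt hp hq hdeg hpq hm
  have hvanish : hilbertDiff π (D + (D - 1)) = 0 := by
    have := hlt (D - 1) (by lia)
    lia
  have htop := formsImage_eq_top hz hπ hvanish
  have hfin : FiniteDimensional F B := Module.Finite.of_surjective (formsImage π _).subtype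
    (LinearMap.range_eq_top.1 (by rw [Submodule.range_subtype, htop]))
  refine ⟨hfin, ?_⟩
  rw [← finrank_top F B, ← htop, finrank_formsImage hz, finrank_formsImage hz,
    show D + (D - 1) + 1 = 2 * D by lia]
  exact sum_range_lt_two_mul_sum_range hD (by simp [hilbertDiff_zero]) (hilbertDiff_succ_le π) hlt

end HilbertFunction

section Dehomogenization

lemma aeval_mul_of_isHomogeneous {σ R A : Type*} [CommSemiring R] [CommSemiring A] [Algebra R A]
    {f : MvPolynomial σ R} {n : ℕ} (hf : f.IsHomogeneous n) (c : A) (v : σ → A) :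
    aeval (fun i => c * v i) f = c ^ n * aeval v f := by
  simp only [aeval_def, eval₂_eq, Finset.mul_sum]
  refine Finset.sum_congr rfl fun m hm => ?_
  simp only [mul_pow, Finset.prod_mul_distrib, Finset.prod_pow_eq_pow_sum]
  rw [← hf.degree_eq_sum_deg_support hm, mul_left_comm]

variable {σ R : Type*} [CommRing R]

-- Sending each variable `x` to `x / X i` in the localization of the quotient by `T` at `X i` kills
-- `X i - 1` and `T`, and sends the form `g` of degree `n` to `g / X i ^ n`.
lemma exists_X_pow_mul_mem_span {T : Set (MvPolynomial σ R)}
    (hT : ∀ t ∈ T, ∃ n, t.IsHomogeneous n) (i : σ) {g : MvPolynomial σ R} {n : ℕ}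
    (hg : g.IsHomogeneous n) (h : g ∈ Ideal.span (insert (X i - 1) T)) :
    ∃ k, X i ^ k * g ∈ Ideal.span T := by
  let A := MvPolynomial σ R ⧸ Ideal.span T
  let z : A := Ideal.Quotient.mk _ (X i)
  let ι : MvPolynomial σ R →ₐ[R] Localization.Away z :=
    (Algebra.algHom R A _).comp (Ideal.Quotient.mkₐ R _)
  let u : Localization.Away z := IsLocalization.Away.invSelf z
  have hu : u * ι (X i) = 1 := (mul_comm _ _).trans (IsLocalization.Away.mul_invSelf z)
  let φ : MvPolynomial σ R →ₐ[R] Localization.Away z := aeval fun j => u * ι (X j)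
  have hφ {f : MvPolynomial σ R} {m : ℕ} (hf : f.IsHomogeneous m) : φ f = u ^ m * ι f := by
    rw [aeval_mul_of_isHomogeneous hf, ← comp_aeval_apply, aeval_X_left_apply]
  have hker : Ideal.span (insert (X i - 1) T) ≤ RingHom.ker φ := by
    rw [Ideal.span_le, Set.insert_subset_iff]
    refine ⟨by simp [φ, RingHom.mem_ker, hu], fun t ht => ?_⟩
    obtain ⟨m, hm⟩ := hT t ht
    have ht0 : ι t = 0 := (congrArg (algebraMap A _)
      (Ideal.Quotient.eq_zero_iff_mem.2 (Ideal.subset_span ht))).trans (map_zero _)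
    exact (hφ hm).trans (by rw [ht0, mul_zero])
  have hg0 : algebraMap A (Localization.Away z) (Ideal.Quotient.mk _ g) = 0 := by
    have := hφ hg ▸ RingHom.mem_ker.1 (hker h)
    exact ((IsUnit.of_mul_eq_one _ hu).pow n).mul_right_eq_zero.1 this
  obtain ⟨⟨_, k, rfl⟩, hk⟩ := (IsLocalization.map_eq_zero_iff (Submonoid.powers z) _ _).1 hg0
  exact ⟨k, Ideal.Quotient.eq_zero_iff_mem.1 (by simpa [z] using hk)⟩

lemma exists_isHomogeneous_of_mem_span_pair {p q f : MvPolynomial σ R} {m n : ℕ}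
    (hp : p.IsHomogeneous n) (hq : q.IsHomogeneous n) (hf : f.IsHomogeneous (m + n))
    (h : f ∈ Ideal.span {p, q}) :
    ∃ a b : MvPolynomial σ R, a.IsHomogeneous m ∧ b.IsHomogeneous m ∧ f = a * p + b * q := by
  obtain ⟨a, b, rfl⟩ := Ideal.mem_span_pair.1 h
  refine ⟨_, _, homogeneousComponent_isHomogeneous m a, homogeneousComponent_isHomogeneous m b, ?_⟩
  rw [← homogeneousComponent_mul_of_isHomogeneous hp,
    ← homogeneousComponent_mul_of_isHomogeneous hq, ← map_add, homogeneousComponent_eq_self hf]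

end Dehomogenization

section GorensteinQuotient

variable {K A : Type*} [Field K] [CommRing A] [Algebra K A]

lemma exists_dual_comp_eq_of_ker_le {V W : Type*} [AddCommGroup V] [Module K V] [AddCommGroup W]
    [Module K W] (φ : V →ₗ[K] W) {l : Module.Dual K V} (h : LinearMap.ker φ ≤ LinearMap.ker l) :
    ∃ L : Module.Dual K W, L ∘ₗ φ = l := by
  have hl : l ∈ (LinearMap.ker φ).dualAnnihilator :=
    (Submodule.mem_dualAnnihilator l).2 fun _ hx => h hx
  rwa [← LinearMap.range_dualMap_eq_dualAnnihilator_ker] at hl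

/-- The kernel of `mulForm K A L`, that is, the largest ideal on which `L` vanishes. -/
def mulFormKer (L : Module.Dual K A) : Ideal A where
  __ := (LinearMap.ker (mulForm K A L)).toAddSubmonoid
  smul_mem' c a ha := by
    ext t
    simpa [mul_comm, mul_left_comm] using LinearMap.congr_fun ha (c * t)

lemma mem_mulFormKer {L : Module.Dual K A} {a : A} :
    a ∈ mulFormKer L ↔ ∀ t, L (a * t) = 0 :=
  LinearMap.ext_iff

lemma le_mulFormKer {L : Module.Dual K A} {I : Ideal A} (h : ∀ a ∈ I, L a = 0) :
    I ≤ mulFormKer L := fun _ ha =>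
  mem_mulFormKer.2 fun t => h _ (I.mul_mem_right t ha)

lemma exists_dual_quotient_mulFormKer (L : Module.Dual K A) :
    ∃ L' : Module.Dual K (A ⧸ mulFormKer L),
      (∀ a, L' (Ideal.Quotient.mk _ a) = L a) ∧ (mulForm K _ L').Nondegenerate := by
  have hker : LinearMap.ker (Ideal.Quotient.mkₐ K (mulFormKer L)).toLinearMap ≤
      LinearMap.ker L := fun a ha => by
    simpa using mem_mulFormKer.1 (Ideal.Quotient.eq_zero_iff_mem.1 ha) 1
  obtain ⟨L', hL'⟩ := exists_dual_comp_eq_of_ker_le _ hker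
  have hL'mk (a : A) : L' (Ideal.Quotient.mk _ a) = L a := LinearMap.congr_fun hL' a
  refine ⟨L', hL'mk, (isSymm_mulForm L').isRefl.nondegenerate_iff_separatingLeft.2 fun b hb => ?_⟩
  obtain ⟨a, rfl⟩ := Ideal.Quotient.mk_surjective b
  refine Ideal.Quotient.eq_zero_iff_mem.2 (mem_mulFormKer.2 fun t => ?_)
  rw [← hL'mk, map_mul]
  exact hb (Ideal.Quotient.mk _ t)

end GorensteinQuotient

section CompleteIntersection

variable {F : Type*} [Field F] {p q : MvPolynomial (Fin 3) F} {D : ℕ}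

lemma exists_restrictLine_eq_mul (hp : p.IsHomogeneous D) (hq : q.IsHomogeneous D)
    (hdeg : (restrictLine p).natDegree = D) (hD : 0 < D)
    (hpq : IsCoprime (restrictLine p) (restrictLine q)) {a b : MvPolynomial (Fin 3) F} {n : ℕ}
    (hb : b.IsHomogeneous n)
    (h : restrictLine a * restrictLine p + restrictLine b * restrictLine q = 0) :
    ∃ c : MvPolynomial (Fin 3) F, (c * p).IsHomogeneous n ∧ (c * q).IsHomogeneous n ∧
      restrictLine (a + c * q) = 0 ∧ restrictLine (b - c * p) = 0 := by
  have hp0 : restrictLine p ≠ 0 := Polynomial.ne_zero_of_natDegree_gt (hdeg.symm ▸ hD)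
  obtain ⟨e, he⟩ : restrictLine p ∣ restrictLine b :=
    hpq.dvd_of_dvd_mul_right ⟨-restrictLine a, by linear_combination h⟩
  have hae : restrictLine a = -(e * restrictLine q) := mul_right_cancel₀ hp0 (by
    rw [he] at h
    linear_combination h)
  obtain rfl | he0 := eq_or_ne e 0
  · exact ⟨0, by simp [isHomogeneous_zero], by simp [isHomogeneous_zero], by simp [hae],
      by simp [he]⟩
  have hle := natDegree_restrictLine_le hb
  rw [he, Polynomial.natDegree_mul hp0 he0, hdeg] at hle
  obtain ⟨c, hc, rfl⟩ := exists_isHomogeneous_restrictLine_eq (n := n - D) (c := e) (by lia)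
  rw [← Nat.sub_add_cancel (n := n) (m := D) (by lia)]
  exact ⟨c, hc.mul hp, hc.mul hq, by simp [hae], by simp [he, mul_comm]⟩

lemma mem_span_pair_of_X_two_mul_mem (hp : p.IsHomogeneous D) (hq : q.IsHomogeneous D)
    (hdeg : (restrictLine p).natDegree = D) (hD : 0 < D)
    (hpq : IsCoprime (restrictLine p) (restrictLine q)) {g : MvPolynomial (Fin 3) F} {m : ℕ}
    (hg : g.IsHomogeneous (m + D)) (h : X 2 * g ∈ Ideal.span {p, q}) :
    g ∈ Ideal.span {p, q} := by
  have hXg : (X 2 * g).IsHomogeneous (m + 1 + D) := by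
    convert (isHomogeneous_X F 2).mul hg using 1
    ring
  obtain ⟨a, b, ha, hb, hab⟩ := exists_isHomogeneous_of_mem_span_pair hp hq hXg h
  have hab0 : restrictLine a * restrictLine p + restrictLine b * restrictLine q = 0 := by
    simpa using (congrArg restrictLine hab).symm
  obtain ⟨c, hcp, hcq, hac, hbc⟩ := exists_restrictLine_eq_mul hp hq hdeg hD hpq hb hab0
  obtain ⟨a', -, ha'⟩ := exists_eq_X_two_mul (ha.add hcq) hac
  obtain ⟨b', -, hb'⟩ := exists_eq_X_two_mul (hb.sub hcp) hbc
  refine Ideal.mem_span_pair.2 ⟨a', b', mul_left_cancel₀ (X_ne_zero (R := F) (2 : Fin 3)) ?_⟩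
  linear_combination -hab - p * ha' - q * hb'

lemma mem_span_pair_of_X_two_pow_mul_mem (hp : p.IsHomogeneous D) (hq : q.IsHomogeneous D)
    (hdeg : (restrictLine p).natDegree = D) (hD : 0 < D)
    (hpq : IsCoprime (restrictLine p) (restrictLine q)) {g : MvPolynomial (Fin 3) F} {m : ℕ}
    (hg : g.IsHomogeneous (m + D)) {k : ℕ} (h : X 2 ^ k * g ∈ Ideal.span {p, q}) :
    g ∈ Ideal.span {p, q} := by
  induction k with
  | zero => simpa using h
  | succ k ih =>
    have hXg : (X 2 ^ k * g).IsHomogeneous (k + m + D) := by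
      simpa only [add_assoc] using (isHomogeneous_X_pow (R := F) (2 : Fin 3) k).mul hg
    rw [pow_succ', mul_assoc] at h
    exact ih (mem_span_pair_of_X_two_mul_mem hp hq hdeg hD hpq hXg h)

lemma mem_span_pair_of_mem_span_insert (hp : p.IsHomogeneous D) (hq : q.IsHomogeneous D)
    (hdeg : (restrictLine p).natDegree = D) (hD : 0 < D)
    (hpq : IsCoprime (restrictLine p) (restrictLine q)) {g : MvPolynomial (Fin 3) F} {m : ℕ}
    (hg : g.IsHomogeneous (m + D)) (h : g ∈ Ideal.span {X 2 - 1, p, q}) :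
    g ∈ Ideal.span {p, q} := by
  have hhom : ∀ t ∈ ({p, q} : Set (MvPolynomial (Fin 3) F)), ∃ n, t.IsHomogeneous n := by
    rintro t (rfl | rfl)
    exacts [⟨D, hp⟩, ⟨D, hq⟩]
  obtain ⟨k, hk⟩ := exists_X_pow_mul_mem_span hhom 2 hg h
  exact mem_span_pair_of_X_two_pow_mul_mem hp hq hdeg hD hpq hg hk

lemma exists_dual_eq_zero_on_span_insert (hp : p.IsHomogeneous D) (hq : q.IsHomogeneous D)
    (hdeg : (restrictLine p).natDegree = D) (hD : 0 < D)
    (hpq : IsCoprime (restrictLine p) (restrictLine q)) {m : ℕ}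
    {l : Module.Dual F (MvPolynomial (Fin 3) F)}
    (hlp : ∀ f : MvPolynomial (Fin 3) F, f.IsHomogeneous m → l (f * p) = 0)
    (hlq : ∀ f : MvPolynomial (Fin 3) F, f.IsHomogeneous m → l (f * q) = 0) :
    ∃ L : Module.Dual F (MvPolynomial (Fin 3) F),
      (∀ g : MvPolynomial (Fin 3) F, g.IsHomogeneous (m + D) → L g = l g) ∧
      ∀ s ∈ Ideal.span {X 2 - 1, p, q}, L s = 0 := by
  let A := homogeneousSubmodule (Fin 3) F (m + D)
  let mk := (Ideal.Quotient.mkₐ F (Ideal.span {X 2 - 1, p, q})).toLinearMap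
  have hker : LinearMap.ker (mk ∘ₗ A.subtype) ≤ LinearMap.ker (l ∘ₗ A.subtype) := by
    rintro ⟨g, hg⟩ hg0
    obtain ⟨a, b, ha, hb, rfl⟩ := exists_isHomogeneous_of_mem_span_pair hp hq hg
      (mem_span_pair_of_mem_span_insert hp hq hdeg hD hpq hg (Ideal.Quotient.eq_zero_iff_mem.1 hg0))
    simp [hlp a ha, hlq b hb]
  obtain ⟨L, hL⟩ := exists_dual_comp_eq_of_ker_le _ hker
  refine ⟨L ∘ₗ mk, fun g hg => LinearMap.congr_fun hL ⟨g, hg⟩, fun s hs => ?_⟩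
  simp [mk, Ideal.Quotient.eq_zero_iff_mem.2 hs]

end CompleteIntersection

section Coprime

lemma exists_mem_isCoprime {F : Type*} (K : Type*) [Field F] [Infinite F] [Field K] [IsAlgClosed K]
    [Algebra F K] {W : Submodule F (Polynomial F)} {c : Polynomial F} (hc : c ≠ 0)
    (h : ∀ ζ : K, Polynomial.aeval ζ c = 0 → ∃ w ∈ W, Polynomial.aeval ζ w ≠ 0) :
    ∃ w ∈ W, IsCoprime c w := by
  let vanishing (ζ : c.rootSet K) : Subspace F W :=
    LinearMap.ker ((Polynomial.aeval (ζ : K)).toLinearMap ∘ₗ W.subtype)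
  have hproper : ∀ ζ, vanishing ζ ≠ ⊤ := fun ζ htop => by
    obtain ⟨w, hw, hne⟩ := h ζ (Polynomial.mem_rootSet.1 ζ.2).2
    exact hne (htop ▸ Submodule.mem_top : (⟨w, hw⟩ : W) ∈ vanishing ζ)
  have hcover : ⋃ ζ, (vanishing ζ : Set W) ≠ Set.univ := fun hU =>
    have := (Polynomial.rootSet_finite c K).to_subtype
    (Subspace.exists_eq_top_of_iUnion_eq_univ hU).elim hproper
  obtain ⟨w, hw⟩ := (Set.ne_univ_iff_exists_notMem _).1 hcover
  rw [Set.mem_iUnion, not_exists] at hw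
  refine ⟨w, w.2, ?_⟩
  rw [Polynomial.isCoprime_iff_aeval_ne_zero_of_isAlgClosed (k := F) K]
  intro ζ
  exact or_iff_not_imp_left.2 fun hζ => hw ⟨ζ, Polynomial.mem_rootSet.2 ⟨hc, not_not.1 hζ⟩⟩

end Coprime

section Roots

lemma aeval_restrictLine {R A : Type*} [CommRing R] [CommRing A] [Algebra R A] (a : A)
    (f : MvPolynomial (Fin 3) R) : Polynomial.aeval a (restrictLine f) = aeval ![a, 1, 0] f := by
  rw [restrictLine, ← AlgHom.comp_apply]
  congr 1
  ext i
  fin_cases i <;> simp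

lemma natDegree_restrictLine_eq {R : Type*} [CommRing R] {p : MvPolynomial (Fin 3) R} {D : ℕ}
    (hp : p.IsHomogeneous D) (h : eval ![1, 0, 0] p ≠ 0) : (restrictLine p).natDegree = D := by
  refine (natDegree_restrictLine_le hp).antisymm (not_lt.1 fun hlt => h ?_)
  obtain ⟨n, rfl⟩ := Nat.exists_eq_add_one_of_ne_zero (Nat.ne_zero_of_lt hlt)
  obtain ⟨f, hf, hfp⟩ := exists_isHomogeneous_restrictLine_eq (Nat.lt_succ_iff.1 hlt)
  have hXf : (X 1 * f).IsHomogeneous (n + 1) := add_comm 1 n ▸ (isHomogeneous_X R 1).mul hf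
  obtain ⟨g, -, hg⟩ := exists_eq_X_two_mul (hp.sub hXf) (by simp [hfp])
  simp [sub_eq_iff_eq_add.1 hg]

lemma im_ne_zero_of_aeval_restrictLine_eq_zero {p : MvPolynomial (Fin 3) ℝ}
    (hzero : ∀ x : Fin 3 → ℝ, x ≠ 0 → eval x p ≠ 0) {ζ : ℂ}
    (hζ : Polynomial.aeval ζ (restrictLine p) = 0) : ζ.im ≠ 0 := fun him => by
  have hreal : algebraMap ℝ ℂ ζ.re = ζ := Complex.ext (by simp) (by simp [him])
  rw [← hreal, Polynomial.aeval_algebraMap_eq_zero_iff, aeval_restrictLine] at hζ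
  exact hzero ![ζ.re, 1, 0] (fun h => one_ne_zero (congrFun h 1)) hζ

end Roots

section MomentForm

section CommRing

variable {σ R : Type*} [CommRing R]

/-- The bilinear form `(f, g) ↦ l (f * g)` on the forms of degree `D`: the moment (or catalecticant)
form of a linear functional `l` on polynomials. -/
noncomputable def momentForm (D : ℕ) : Module.Dual R (MvPolynomial σ R) →ₗ[R]
    LinearMap.BilinForm R (homogeneousSubmodule σ R D) where
  toFun l := (mulForm R _ l).restrict _
  map_add' _ _ := rfl
  map_smul' _ _ := rfl

@[simp]
lemma momentForm_apply {D : ℕ} (l : Module.Dual R (MvPolynomial σ R))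
    (f g : homogeneousSubmodule σ R D) : momentForm D l f g = l (f * g) := rfl

lemma isSymm_momentForm (D : ℕ) (l : Module.Dual R (MvPolynomial σ R)) :
    (momentForm D l).IsSymm :=
  (isSymm_mulForm l).restrict _

lemma apply_mul_eq_zero_of_mem_ker_momentForm {D : ℕ} {l : Module.Dual R (MvPolynomial σ R)}
    {w : homogeneousSubmodule σ R D} (hw : w ∈ LinearMap.ker (momentForm D l))
    {f : MvPolynomial σ R} (hf : f.IsHomogeneous D) : l (f * w) = 0 := by
  rw [mul_comm]
  exact LinearMap.congr_fun hw ⟨f, hf⟩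

lemma momentForm_eq_zero_iff {D : ℕ} {l : Module.Dual R (MvPolynomial σ R)} :
    momentForm D l = 0 ↔ ∀ g : MvPolynomial σ R, g.IsHomogeneous (D + D) → l g = 0 := by
  constructor
  · intro h
    suffices homogeneousSubmodule σ R D * homogeneousSubmodule σ R D ≤ LinearMap.ker l by
      rw [← homogeneousSubmodule_one_pow, ← pow_add, homogeneousSubmodule_one_pow] at this
      exact fun g hg => this hg
    exact Submodule.mul_le.2 fun f hf g hg =>
      LinearMap.congr_fun (LinearMap.congr_fun h ⟨f, hf⟩) ⟨g, hg⟩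
  · intro h
    ext f g
    exact h _ (f.2.mul g.2)

end CommRing

variable {D : ℕ} {p : MvPolynomial (Fin 3) ℝ}

-- Otherwise the real and imaginary parts of evaluation at `(ζ, 1, 0)`, which are linearly
-- independent on forms, would both be multiples of `l`.
lemma exists_mem_ker_momentForm_aeval_ne_zero (hD : 0 < D)
    {l : Module.Dual ℝ (MvPolynomial (Fin 3) ℝ)}
    (hext : ∀ l', LinearMap.ker (momentForm D l) ≤ LinearMap.ker (momentForm D l') →
      ∃ c : ℝ, momentForm D l' = c • momentForm D l) {ζ : ℂ} (hζ : ζ.im ≠ 0) :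
    ∃ w ∈ LinearMap.ker (momentForm D l),
      aeval ![ζ, 1, 0] (w : MvPolynomial (Fin 3) ℝ) ≠ 0 := by
  by_contra! hvanish
  let part (r : ℂ →ₗ[ℝ] ℝ) : Module.Dual ℝ (MvPolynomial (Fin 3) ℝ) :=
    r ∘ₗ (aeval ![ζ, 1, 0]).toLinearMap
  have hpart (r : ℂ →ₗ[ℝ] ℝ) : ∃ c : ℝ, momentForm D (part r) = c • momentForm D l := by
    refine hext _ fun w hw => ?_
    ext g
    simp [part, hvanish w hw]
  obtain ⟨c, hc⟩ := hpart Complex.reLm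
  obtain ⟨c', hc'⟩ := hpart Complex.imLm
  obtain ⟨n, rfl⟩ := Nat.exists_eq_add_one_of_ne_zero hD.ne'
  let y : homogeneousSubmodule (Fin 3) ℝ (n + 1) := ⟨X 1 ^ (n + 1), isHomogeneous_X_pow _ _⟩
  let x : homogeneousSubmodule (Fin 3) ℝ (n + 1) :=
    ⟨X 0 * X 1 ^ n, add_comm 1 n ▸ (isHomogeneous_X ℝ 0).mul (isHomogeneous_X_pow _ _)⟩
  have hyy : 1 = c * l (y * y) := by simpa [part, y] using LinearMap.congr_fun₂ hc y y
  have hyy' : 0 = c' * l (y * y) := by simpa [part, y] using LinearMap.congr_fun₂ hc' y y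
  have hxy' : ζ.im = c' * l (x * y) := by simpa [part, x, y] using LinearMap.congr_fun₂ hc' x y
  obtain h | h := mul_eq_zero.1 hyy'.symm
  · exact hζ (by rw [hxy', h, zero_mul])
  · exact one_ne_zero (by rw [hyy, h, mul_zero])

lemma exists_mem_ker_momentForm_isCoprime (hD : 0 < D) (hp0 : restrictLine p ≠ 0)
    (hzero : ∀ x : Fin 3 → ℝ, x ≠ 0 → eval x p ≠ 0) {l : Module.Dual ℝ (MvPolynomial (Fin 3) ℝ)}
    (hext : ∀ l', LinearMap.ker (momentForm D l) ≤ LinearMap.ker (momentForm D l') →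
      ∃ c : ℝ, momentForm D l' = c • momentForm D l) :
    ∃ q ∈ LinearMap.ker (momentForm D l),
      IsCoprime (restrictLine p) (restrictLine (q : MvPolynomial (Fin 3) ℝ)) := by
  let restrict : homogeneousSubmodule (Fin 3) ℝ D →ₗ[ℝ] Polynomial ℝ :=
    restrictLine.toLinearMap ∘ₗ Submodule.subtype _
  obtain ⟨_, ⟨q, hq, rfl⟩, hpq⟩ := exists_mem_isCoprime ℂ
    (W := (LinearMap.ker (momentForm D l)).map restrict) hp0 fun ζ hζ => by
      obtain ⟨w, hw, hne⟩ := exists_mem_ker_momentForm_aeval_ne_zero hD hext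
        (im_ne_zero_of_aeval_restrictLine_eq_zero hzero hζ)
      refine ⟨_, Submodule.mem_map_of_mem hw, ?_⟩
      rwa [← aeval_restrictLine] at hne
  exact ⟨q, hq, hpq⟩

lemma isEmpty_algHom_of_eval_ne_zero {R B : Type*} [CommRing R] [Nontrivial R] [CommRing B]
    [Algebra R B] {p : MvPolynomial (Fin 3) R} {π : MvPolynomial (Fin 3) R →ₐ[R] B}
    (hz : π (X 2) = 1) (hπp : π p = 0) (hzero : ∀ x : Fin 3 → R, x ≠ 0 → eval x p ≠ 0) :
    IsEmpty (B →ₐ[R] R) := by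
  refine ⟨fun χ => hzero (fun i => χ (π (X i))) (fun h => ?_) ?_⟩
  · simpa [hz] using congrFun h 2
  · have hχ : χ (π p) = 0 := by rw [hπp, map_zero]
    exact (DFunLike.congr_fun (aeval_unique (χ.comp π)) p).symm.trans hχ

lemma apply_eq_zero_of_isCoprime {q : MvPolynomial (Fin 3) ℝ} (hD : 0 < D)
    (hp : p.IsHomogeneous D) (hq : q.IsHomogeneous D)
    (hzero : ∀ x : Fin 3 → ℝ, x ≠ 0 → eval x p ≠ 0) (hdeg : (restrictLine p).natDegree = D)
    (hpq : IsCoprime (restrictLine p) (restrictLine q))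
    {l : Module.Dual ℝ (MvPolynomial (Fin 3) ℝ)}
    (hl : ∀ f : MvPolynomial (Fin 3) ℝ, f.IsHomogeneous D → 0 ≤ l (f * f))
    (hlp : ∀ f : MvPolynomial (Fin 3) ℝ, f.IsHomogeneous D → l (f * p) = 0)
    (hlq : ∀ f : MvPolynomial (Fin 3) ℝ, f.IsHomogeneous D → l (f * q) = 0)
    {g : MvPolynomial (Fin 3) ℝ} (hg : g.IsHomogeneous (D + D)) : l g = 0 := by
  obtain ⟨L, hLl, hLI⟩ := exists_dual_eq_zero_on_span_insert hp hq hdeg hD hpq hlp hlq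
  obtain ⟨L', hL', hnd⟩ := exists_dual_quotient_mulFormKer L
  let π := Ideal.Quotient.mkₐ ℝ (mulFormKer L)
  have hI {f} (hf : f ∈ Ideal.span {X 2 - 1, p, q}) : π f = 0 :=
    Ideal.Quotient.eq_zero_iff_mem.2 (le_mulFormKer hLI hf)
  have hπp : π p = 0 := hI (Ideal.subset_span (by simp))
  have hπq : π q = 0 := hI (Ideal.subset_span (by simp))
  have hz : π (X 2) = 1 := by
    rw [← sub_eq_zero, ← map_one π, ← map_sub]
    exact hI (Ideal.subset_span (by simp))
  rw [← hLl g hg, ← hL']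
  by_contra hne
  have : Nontrivial (MvPolynomial (Fin 3) ℝ ⧸ mulFormKer L) :=
    nontrivial_of_ne (Ideal.Quotient.mk _ g) 0 fun h => hne (by rw [h, map_zero])
  obtain ⟨hfin, hlt⟩ := finiteDimensional_and_finrank_lt_two_mul_finrank_formsImage hz
    Ideal.Quotient.mk_surjective hD (mem_vanishingForms.2 ⟨hp, hπp⟩)
    (mem_vanishingForms.2 ⟨hq, hπq⟩) hdeg hpq
  obtain ⟨i, hi⟩ := exists_mul_self_eq_neg_one_of_isEmpty_algHom
    (isEmpty_algHom_of_eval_ne_zero hz hπp hzero)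
  refine absurd (two_mul_finrank_le_of_mul_self_eq_neg_one hi hnd ?_) hlt.not_ge
  rintro _ ⟨f, hf, rfl⟩
  have hff : L' (π f * π f) = l (f * f) := by
    rw [← map_mul, ← hLl _ (hf.mul hf)]
    exact hL' _
  exact (hl f hf).trans_eq hff.symm

lemma apply_eq_zero_of_apply_mul_self_eq_zero (hD : 0 < D) (hp : p.IsHomogeneous D)
    (hzero : ∀ x : Fin 3 → ℝ, x ≠ 0 → eval x p ≠ 0)
    {l : Module.Dual ℝ (MvPolynomial (Fin 3) ℝ)}
    (hl : ∀ f : MvPolynomial (Fin 3) ℝ, f.IsHomogeneous D → 0 ≤ l (f * f))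
    (h0 : l (p * p) = 0) {g : MvPolynomial (Fin 3) ℝ} (hg : g.IsHomogeneous (D + D)) :
    l g = 0 := by
  suffices momentForm D l = 0 from momentForm_eq_zero_iff.1 this g hg
  by_contra hne
  have hpsd : (momentForm D l).IsPosSemidef := ⟨isSymm_momentForm D l, ⟨fun f => hl f f.2⟩⟩
  have hsymm : ∀ b ∈ LinearMap.range (momentForm (σ := Fin 3) (R := ℝ) D), b.IsSymm := by
    rintro _ ⟨l, rfl⟩
    exact isSymm_momentForm D l
  obtain ⟨_, ⟨e, rfl⟩, hpsdₑ, hneₑ, hker, hext⟩ :=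
    exists_posSemidef_forall_ker_le hsymm ⟨l, rfl⟩ hpsd hne
  have hpker : ⟨p, hp⟩ ∈ LinearMap.ker (momentForm D e) :=
    hker (mem_ker_of_apply_self_eq_zero hpsd h0)
  have hdeg := natDegree_restrictLine_eq hp (hzero ![1, 0, 0] fun h => one_ne_zero (congrFun h 0))
  obtain ⟨q, hqker, hpq⟩ := exists_mem_ker_momentForm_isCoprime hD
    (Polynomial.ne_zero_of_natDegree_gt (hdeg.symm ▸ hD)) hzero fun l' => hext _ ⟨l', rfl⟩
  refine hneₑ (momentForm_eq_zero_iff.2 fun _ => apply_eq_zero_of_isCoprime hD hp q.2 hzero hdeg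
    hpq (fun f hf => hpsdₑ.nonneg ⟨f, hf⟩)
    (fun _ => apply_mul_eq_zero_of_mem_ker_momentForm hpker)
    fun _ => apply_mul_eq_zero_of_mem_ker_momentForm hqker)

end MomentForm

/-- if `p ∈ R[x]_{3,2d}` is strictly positive and `ℓ ∈ Σ_{3,4d}^*` is
nonzero (on the degree-`4d` forms), then `ℓ(p²) > 0`; equivalently `p²` lies in the
interior of `Σ_{3,4d}`. -/
theorem stmt_7 (d : ℕ) (hd : 1 ≤ d) (p : MvPolynomial (Fin 3) ℝ)
    (hp : p.IsHomogeneous (2 * d))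
    (hpos : ∀ x : Fin 3 → ℝ, x ≠ 0 → 0 < eval x p)
    (l : MvPolynomial (Fin 3) ℝ →ₗ[ℝ] ℝ)
    (hl : ∀ f : MvPolynomial (Fin 3) ℝ, f.IsHomogeneous (2 * d) → 0 ≤ l (f ^ 2))
    (hne : ∃ f : MvPolynomial (Fin 3) ℝ, f.IsHomogeneous (4 * d) ∧ l f ≠ 0) :
    0 < l (p ^ 2) := by
  refine (hl p hp).lt_of_ne' fun h0 => ?_
  obtain ⟨f, hf, hlf⟩ := hne
  have hf' : f.IsHomogeneous (2 * d + 2 * d) := by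
    rwa [← two_mul, ← mul_assoc]
  refine hlf (apply_eq_zero_of_apply_mul_self_eq_zero (Nat.mul_pos two_pos hd) hp
    (fun x hx => (hpos x hx).ne') (fun g hg => ?_) ?_ hf')
  · simpa only [sq] using hl g hg
  · simpa only [sq] using h0
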